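/- arXiv:1904.05887 — 7 statements merged into one kernel-verified Lean document; each statement's English description precedes it below -/
import Mathlib

section
/- Let G be a finite directed graph and let i, j be vertices. The pair (i, j) belongs to the transient category, i.e., the set of reachable time steps ρ(i,j) is nonempty and finite and the set of unreachable time steps σ(i,j) is infinite, if and only if the following two conditions hold: (a) there exists a walk of positive length from i to j; and (b) there is no vertex v such that v lies on some walk from i to j (i.e., there is a walk, possibly of length 0, from i to v and a walk, possibly of length 0, from v to j) and v lies on a closed walk of positive length. Moreover, in this case ρ(i,j) is exactly the set of lengths of the paths from i to j. (Condition (b) is equivalent to π̄_{ij} = ∅ in the paper's notation: no strongly connected component containing a cycle occurs along any path of the condensation digraph from the component of i to the component of j.) -/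
namespace BCNPaper6

variable {V : Type*}

/-- A walk from `i` to `j` encoded as a nonempty list of visited vertices. -/
def IsWalk (E : V → V → Prop) (i j : V) (l : List V) : Prop :=
  l.head? = some i ∧ l.getLast? = some j ∧ l.Chain' E

/-- There is a walk of length exactly `k` from `i` to `j`. -/
def HasWalk (E : V → V → Prop) (k : ℕ) (i j : V) : Prop :=
  ∃ l : List V, IsWalk E i j l ∧ l.length = k + 1

/-- The set of reachable time steps ρ(i,j). -/
def rho (E : V → V → Prop) (i j : V) : Set ℕ :=
  {k | 0 < k ∧ HasWalk E k i j}

/-- The set of unreachable time steps σ(i,j). -/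
def sigmaSet (E : V → V → Prop) (i j : V) : Set ℕ :=
  {k | 0 < k ∧ k ∉ rho E i j}

/-- A path is a walk with pairwise distinct vertices. -/
def IsPath (E : V → V → Prop) (i j : V) (l : List V) : Prop :=
  IsWalk E i j l ∧ l.Nodup

theorem isWalk_cons (E : V → V → Prop) (i j x y : V) (t : List V) :
    IsWalk E i j (x :: y :: t) ↔ x = i ∧ E x y ∧ IsWalk E y j (y :: t) := by
  simp only [IsWalk, List.Chain', List.isChain_cons_cons, List.head?_cons, Option.some.injEq,
    List.getLast?_cons_cons, true_and]
  tauto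

theorem hasWalk_zero (E : V → V → Prop) (i : V) : HasWalk E 0 i i :=
  ⟨[i], by simp [IsWalk, List.Chain'], rfl⟩

theorem hasWalk_zero_eq (E : V → V → Prop) (i j : V) (h : HasWalk E 0 i j) : i = j := by
  obtain ⟨l, h, hl⟩ := h
  obtain ⟨x, rfl⟩ := List.length_eq_one_iff.1 hl
  simp [IsWalk] at h
  exact h.1.symm.trans h.2.1

theorem hasWalk_succ (E : V → V → Prop) (k : ℕ) (i j : V) :
    HasWalk E (k + 1) i j ↔ ∃ m, E i m ∧ HasWalk E k m j := by
  constructor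
  · rintro ⟨l, h, hl⟩
    match l, h, hl with
    | x :: y :: t, h, hl =>
      rw [isWalk_cons] at h
      obtain ⟨rfl, h1, h2⟩ := h
      exact ⟨y, h1, _, h2, by simpa using hl⟩
  · rintro ⟨m, hm, l, h, hl⟩
    match l, h, hl with
    | y :: t, h, hl =>
      have : y = m := by simpa using h.1
      subst this
      exact ⟨i :: y :: t, (isWalk_cons ..).2 ⟨rfl, hm, h⟩, by simpa using hl⟩

theorem hasWalk_trans (E : V → V → Prop) (a b : ℕ) (i v j : V)
    (h1 : HasWalk E a i v) (h2 : HasWalk E b v j) : HasWalk E (a + b) i j := by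
  induction a generalizing i with
  | zero =>
    have := hasWalk_zero_eq E i v h1
    subst this
    simpa using h2
  | succ a ih =>
    obtain ⟨m, hm, h⟩ := (hasWalk_succ ..).1 h1
    rw [Nat.add_right_comm]
    exact (hasWalk_succ ..).2 ⟨m, hm, ih m h⟩

theorem hasWalk_mul (E : V → V → Prop) (c : ℕ) (v : V) (h : HasWalk E c v v) (n : ℕ) :
    HasWalk E (n * c) v v := by
  induction n with
  | zero => simpa using hasWalk_zero E v
  | succ n ih =>
    rw [Nat.succ_mul]
    exact hasWalk_trans E _ _ v v v ih h

theorem hasWalk_of_mem (E : V → V → Prop) (j v : V) (l : List V) (i : V)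
    (h : IsWalk E i j l) (hv : v ∈ l) :
    (∃ a, HasWalk E a i v) ∧ ∃ b, HasWalk E b v j := by
  induction l generalizing i with
  | nil => simp at hv
  | cons x t ih =>
    have hx : x = i := by simpa using h.1
    subst hx
    rcases List.mem_cons.1 hv with rfl | hv
    · exact ⟨⟨0, hasWalk_zero E _⟩, t.length, _, h, rfl⟩
    · cases t with
      | nil => simp at hv
      | cons y t =>
        obtain ⟨-, h1, h2⟩ := (isWalk_cons ..).1 h
        obtain ⟨⟨a, ha⟩, hb⟩ := ih y h2 hv
        exact ⟨⟨a + 1, (hasWalk_succ ..).2 ⟨y, h1, ha⟩⟩, hb⟩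

theorem exists_cycle (E : V → V → Prop) (j : V) (l : List V) (i : V)
    (h : IsWalk E i j l) (hn : ¬ l.Nodup) :
    ∃ v : V, (∃ a : ℕ, HasWalk E a i v) ∧ (∃ b : ℕ, HasWalk E b v j) ∧
      (∃ c : ℕ, 0 < c ∧ HasWalk E c v v) := by
  induction l generalizing i with
  | nil => simp at hn
  | cons x t ih =>
    have hx : x = i := by simpa using h.1
    subst hx
    cases t with
    | nil => simp at hn
    | cons y t =>
      obtain ⟨-, h1, h2⟩ := (isWalk_cons ..).1 h
      by_cases hm : x ∈ y :: t
      · obtain ⟨⟨a, ha⟩, hb⟩ := hasWalk_of_mem E j x _ y h2 hm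
        exact ⟨x, ⟨0, hasWalk_zero E x⟩, hb, a + 1, a.succ_pos,
          (hasWalk_succ ..).2 ⟨y, h1, ha⟩⟩
      · obtain ⟨v, ⟨a, ha⟩, hb⟩ := ih y h2 (fun h' => hn (List.nodup_cons.2 ⟨hm, h'⟩))
        exact ⟨v, ⟨a + 1, (hasWalk_succ ..).2 ⟨y, h1, ha⟩⟩, hb⟩

theorem stmt6 [Fintype V] (E : V → V → Prop) (i j : V) :
    (((rho E i j).Nonempty ∧ (rho E i j).Finite ∧ (sigmaSet E i j).Infinite) ↔
      ((∃ k : ℕ, 0 < k ∧ HasWalk E k i j) ∧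
        ¬ ∃ v : V, (∃ a : ℕ, HasWalk E a i v) ∧ (∃ b : ℕ, HasWalk E b v j) ∧
            (∃ c : ℕ, 0 < c ∧ HasWalk E c v v))) ∧
    (((rho E i j).Nonempty ∧ (rho E i j).Finite ∧ (sigmaSet E i j).Infinite) →
      rho E i j = {k : ℕ | ∃ l : List V, IsPath E i j l ∧ l.length = k + 1}) := by
  have key : ((rho E i j).Nonempty ∧ (rho E i j).Finite ∧ (sigmaSet E i j).Infinite) →
      ¬ ∃ v : V, (∃ a : ℕ, HasWalk E a i v) ∧ (∃ b : ℕ, HasWalk E b v j) ∧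
            (∃ c : ℕ, 0 < c ∧ HasWalk E c v v) := by
    rintro ⟨-, hf, -⟩ ⟨v, ⟨a, ha⟩, ⟨b, hb⟩, c, hc, hv⟩
    obtain ⟨N, hN⟩ := hf.bddAbove
    have hw := hasWalk_trans E _ _ _ _ _
      (hasWalk_trans E _ _ _ _ _ ha (hasWalk_mul E c v hv (N + 1))) hb
    have hlt : N + 1 ≤ (N + 1) * c := Nat.le_mul_of_pos_right _ hc
    have := hN (show a + (N + 1) * c + b ∈ rho E i j from ⟨by omega, hw⟩)
    omega
  refine ⟨⟨fun h => ⟨h.1, key h⟩, ?_⟩, ?_⟩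
  · rintro ⟨hne, hcyc⟩
    have hf : (rho E i j).Finite := by
      refine (Set.finite_Iio (Fintype.card V)).subset ?_
      rintro k ⟨-, l, hl, hk⟩
      have hnd : l.Nodup := by
        by_contra hn
        exact hcyc (exists_cycle E j l i hl hn)
      have := hnd.length_le_card
      simp only [Set.mem_Iio]
      omega
    refine ⟨hne, hf, ?_⟩
    have : sigmaSet E i j = Set.Ioi 0 \ rho E i j := rfl
    rw [this]
    exact (Set.Ioi_infinite 0).diff hf
  · intro h
    have hcyc := key h
    ext k
    constructor
    · rintro ⟨-, l, hl, hk⟩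
      refine ⟨l, ⟨hl, ?_⟩, hk⟩
      by_contra hn
      exact hcyc (exists_cycle E j l i hl hn)
    · rintro ⟨l, ⟨hl, -⟩, hk⟩
      refine ⟨?_, l, hl, hk⟩
      rcases Nat.eq_zero_or_pos k with rfl | hpos
      · have hij := hasWalk_zero_eq E i j ⟨l, hl, hk⟩
        subst hij
        obtain ⟨m, hm⟩ := h.1
        exact absurd ⟨i, ⟨0, hasWalk_zero E i⟩, ⟨0, hasWalk_zero E i⟩, m, hm⟩ hcyc
      · exact hpos

end BCNPaper6
end

section
/- With the condensation notation below, for any ordered pair of vertices (i, j) of a finite directed graph G, the pair (i, j) belongs to the primitive category — i.e., the set of reachable time steps ρ(i,j) is infinite and the set of unreachable time steps σ(i,j) is finite — if and only if π̄_{ij} = {0, 1, ..., η̄_{ij} − 1} (that is, π̄_{ij} is a complete residue system modulo η̄_{ij}). -/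
namespace BCNPaper7

variable {V : Type*}

/-- A walk from `i` to `j` encoded as a nonempty list of visited vertices. -/
def IsWalk (E : V → V → Prop) (i j : V) (l : List V) : Prop :=
  l.head? = some i ∧ l.getLast? = some j ∧ l.Chain' E

/-- There is a walk of length exactly `k` from `i` to `j`. -/
def HasWalk (E : V → V → Prop) (k : ℕ) (i j : V) : Prop :=
  ∃ l : List V, IsWalk E i j l ∧ l.length = k + 1

/-- The set of reachable time steps ρ(i,j). -/
def rho (E : V → V → Prop) (i j : V) : Set ℕ :=
  {k | 0 < k ∧ HasWalk E k i j}

/-- The set of unreachable time steps σ(i,j). -/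
def sigmaSet (E : V → V → Prop) (i j : V) : Set ℕ :=
  {k | 0 < k ∧ k ∉ rho E i j}

/-- A path is a walk with pairwise distinct vertices. -/
def IsPath (E : V → V → Prop) (i j : V) (l : List V) : Prop :=
  IsWalk E i j l ∧ l.Nodup

/-- The strongly connected component of a vertex `i`. -/
def sccOf (E : V → V → Prop) (i : V) : Set V :=
  {v | v = i ∨ ((∃ k : ℕ, 0 < k ∧ HasWalk E k i v) ∧ (∃ k : ℕ, 0 < k ∧ HasWalk E k v i))}

/-- `X` is a strongly connected component of the graph. -/
def IsSCC (E : V → V → Prop) (X : Set V) : Prop :=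
  ∃ i : V, X = sccOf E i

/-- There is a cycle (closed walk of positive length `k` with no repeated vertices
other than its endpoints) all of whose vertices lie in `X`. -/
def IsCycleIn (E : V → V → Prop) (X : Set V) (k : ℕ) : Prop :=
  ∃ v : V, ∃ l : List V, IsWalk E v v l ∧ l.length = k + 1 ∧ 0 < k ∧
    l.dropLast.Nodup ∧ ∀ u ∈ l, u ∈ X

/-- `g` is the greatest common divisor of the set `S` of natural numbers
(`g = 0` if `S` is empty). -/
def IsGCDSet (S : Set ℕ) (g : ℕ) : Prop :=
  (∀ s ∈ S, g ∣ s) ∧ ∀ d : ℕ, (∀ s ∈ S, d ∣ s) → d ∣ g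

/-- `m` is the least common multiple of the set `S` of natural numbers
(`m = 1` if `S` is empty). -/
def IsLCMSet (S : Set ℕ) (m : ℕ) : Prop :=
  (∀ s ∈ S, s ∣ m) ∧ ∀ c : ℕ, (∀ s ∈ S, s ∣ c) → m ∣ c

/-- A type-2 SCC: an SCC containing a cycle of the graph. -/
def IsT2 (E : V → V → Prop) (X : Set V) : Prop :=
  IsSCC E X ∧ ∃ k : ℕ, IsCycleIn E X k

/-- `η` is the index of imprimitivity of the T2SCC `X`: the gcd of the lengths of
the cycles of the graph contained in `X`. -/
def ImprimIndex (E : V → V → Prop) (X : Set V) (η : ℕ) : Prop :=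
  IsGCDSet {k : ℕ | IsCycleIn E X k} η

/-- The edge relation of the condensation digraph. -/
def CondE (E : V → V → Prop) (X Y : Set V) : Prop :=
  X ≠ Y ∧ ∃ u ∈ X, ∃ v ∈ Y, E u v

/-- `L` is a path in the condensation digraph from the SCC of `i` to the SCC of `j`. -/
def IsCondPath (E : V → V → Prop) (i j : V) (L : List (Set V)) : Prop :=
  L.head? = some (sccOf E i) ∧ L.getLast? = some (sccOf E j) ∧
  L.Chain' (CondE E) ∧ L.Nodup ∧ ∀ X ∈ L, IsSCC E X

/-- Remove consecutive repetitions from a list. -/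
noncomputable def collapse {α : Type*} (l : List α) : List α :=
  letI : DecidableRel (α := α) (· ≠ ·) := Classical.decRel _
  l.destutter (· ≠ ·)

/-- A walk `l` in `G` belongs to the class of the condensation path `L` if the
sequence of SCCs of its vertices, with consecutive repetitions removed, is `L`. -/
def InClass (E : V → V → Prop) (L : List (Set V)) (l : List V) : Prop :=
  collapse (l.map (sccOf E)) = L

theorem isWalk_nil {E : V → V → Prop} {i j : V} : ¬ IsWalk E i j [] := by
  simp [IsWalk]

theorem isWalk_singleton {E : V → V → Prop} {i j a : V} :
    IsWalk E i j [a] ↔ a = i ∧ a = j := by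
  simp [IsWalk, List.Chain']

theorem isWalk_cons_cons {E : V → V → Prop} {i j a b : V} {l : List V} :
    IsWalk E i j (a :: b :: l) ↔ a = i ∧ E a b ∧ IsWalk E b j (b :: l) := by
  simp only [IsWalk, List.Chain', List.head?_cons, List.getLast?_cons_cons,
    List.isChain_cons_cons, Option.some.injEq]
  tauto

theorem isWalk_head {E : V → V → Prop} {i j a : V} {l : List V}
    (h : IsWalk E i j (a :: l)) : a = i := by
  simpa using h.1

theorem hw_zero (E : V → V → Prop) (i : V) : HasWalk E 0 i i :=
  ⟨[i], isWalk_singleton.2 ⟨rfl, rfl⟩, rfl⟩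

theorem walk_append {E : V → V → Prop} {i v j : V} (l1 l2 : List V)
    (h1 : IsWalk E i v l1) (h2 : IsWalk E v j l2) :
    IsWalk E i j (l1 ++ l2.tail) := by
  induction l1 generalizing i with
  | nil => exact absurd h1 isWalk_nil
  | cons a t ih =>
    cases t with
    | nil =>
      obtain ⟨rfl, rfl⟩ := isWalk_singleton.1 h1
      cases l2 with
      | nil => exact absurd h2 isWalk_nil
      | cons b l2 =>
        obtain rfl := isWalk_head h2
        simpa using h2
    | cons b t =>
      obtain ⟨rfl, hab, hw⟩ := isWalk_cons_cons.1 h1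
      have := ih hw
      simp only [List.cons_append] at this ⊢
      exact isWalk_cons_cons.2 ⟨rfl, hab, this⟩

theorem hw_add {E : V → V → Prop} {i v j : V} {m n : ℕ}
    (h1 : HasWalk E m i v) (h2 : HasWalk E n v j) : HasWalk E (m + n) i j := by
  obtain ⟨l1, w1, e1⟩ := h1
  obtain ⟨l2, w2, e2⟩ := h2
  exact ⟨_, walk_append l1 l2 w1 w2, by simp; omega⟩

theorem hw_edge {E : V → V → Prop} {i j : V} (h : E i j) : HasWalk E 1 i j :=
  ⟨[i, j], isWalk_cons_cons.2 ⟨rfl, h, isWalk_singleton.2 ⟨rfl, rfl⟩⟩, rfl⟩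

theorem hw_mem {E : V → V → Prop} {i j v : V} {l : List V} (h : IsWalk E i j l) (hv : v ∈ l) :
    (∃ a, HasWalk E a i v) ∧ ∃ b, HasWalk E b v j := by
  induction l generalizing i with
  | nil => simp at hv
  | cons a t ih =>
    obtain rfl := isWalk_head h
    rcases List.mem_cons.1 hv with rfl | hv
    · exact ⟨⟨0, hw_zero E _⟩, t.length, _, h, rfl⟩
    · cases t with
      | nil => simp at hv
      | cons b t =>
        obtain ⟨-, hab, hw⟩ := isWalk_cons_cons.1 h
        obtain ⟨⟨x, hx⟩, hy⟩ := ih hw hv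
        exact ⟨⟨_, hw_add (hw_edge hab) hx⟩, hy⟩

theorem hw_eq_of_zero {E : V → V → Prop} {i j : V} (h : HasWalk E 0 i j) : i = j := by
  obtain ⟨l, w, e⟩ := h
  obtain ⟨a, rfl⟩ := List.length_eq_one_iff.1 e
  obtain ⟨rfl, rfl⟩ := isWalk_singleton.1 w
  rfl

theorem mem_scc {E : V → V → Prop} {i v : V} :
    v ∈ sccOf E i ↔ (∃ k, HasWalk E k i v) ∧ ∃ k, HasWalk E k v i := by
  constructor
  · rintro (rfl | ⟨⟨k, -, h⟩, ⟨m, -, h'⟩⟩)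
    · exact ⟨⟨0, hw_zero E _⟩, ⟨0, hw_zero E _⟩⟩
    · exact ⟨⟨_, h⟩, ⟨_, h'⟩⟩
  · rintro ⟨⟨k, h⟩, ⟨m, h'⟩⟩
    by_cases hv : v = i
    · exact Or.inl hv
    · refine Or.inr ⟨⟨k, Nat.pos_of_ne_zero ?_, h⟩, ⟨m, Nat.pos_of_ne_zero ?_, h'⟩⟩
      · rintro rfl
        exact hv (hw_eq_of_zero h).symm
      · rintro rfl
        exact hv (hw_eq_of_zero h')

theorem scc_eq {E : V → V → Prop} {u v : V} {a b : ℕ} (h : HasWalk E a u v)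
    (h' : HasWalk E b v u) : sccOf E u = sccOf E v := by
  ext w
  simp only [mem_scc]
  constructor
  · rintro ⟨⟨k, h1⟩, ⟨m, h2⟩⟩
    exact ⟨⟨_, hw_add h' h1⟩, ⟨_, hw_add h2 h⟩⟩
  · rintro ⟨⟨k, h1⟩, ⟨m, h2⟩⟩
    exact ⟨⟨_, hw_add h h1⟩, ⟨_, hw_add h2 h'⟩⟩

theorem self_mem_scc (E : V → V → Prop) (v : V) : v ∈ sccOf E v := Or.inl rfl

theorem scc_eq_of_mem {E : V → V → Prop} {u v : V} (h : u ∈ sccOf E v) :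
    sccOf E u = sccOf E v := by
  obtain ⟨⟨a, ha⟩, ⟨b, hb⟩⟩ := mem_scc.1 h
  exact scc_eq hb ha

section Collapse
variable {α : Type*}

theorem collapse_nil : collapse ([] : List α) = [] := rfl

theorem collapse_singleton (a : α) : collapse [a] = [a] := rfl

theorem collapse_same (a : α) (l : List α) : collapse (a :: a :: l) = collapse (a :: l) := by
  simp [collapse, List.destutter_cons']

theorem collapse_ne {a b : α} (h : a ≠ b) (l : List α) :
    collapse (a :: b :: l) = a :: collapse (b :: l) := by
  simp [collapse, List.destutter_cons', h]

theorem mem_collapse {x : α} {l : List α} : x ∈ collapse l ↔ x ∈ l := by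
  induction l with
  | nil => simp [collapse_nil]
  | cons a t ih =>
    cases t with
    | nil => simp [collapse_singleton]
    | cons b t =>
      by_cases h : a = b
      · subst h
        rw [collapse_same, ih]
        simp
      · rw [collapse_ne h, List.mem_cons, ih]
        simp

theorem head_collapse (l : List α) : (collapse l).head? = l.head? := by
  induction l with
  | nil => rfl
  | cons a t ih =>
    cases t with
    | nil => rfl
    | cons b t =>
      by_cases h : a = b
      · subst h
        rw [collapse_same, ih]
        simp
      · rw [collapse_ne h]
        simp

theorem exists_collapse (a : α) (l : List α) : ∃ t, collapse (a :: l) = a :: t := by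
  have := head_collapse (a :: l)
  cases h : collapse (a :: l) with
  | nil => simp [h] at this
  | cons b t => simp [h] at this; exact ⟨t, by rw [this]⟩

theorem last_collapse (l : List α) : (collapse l).getLast? = l.getLast? := by
  induction l with
  | nil => rfl
  | cons a t ih =>
    cases t with
    | nil => rfl
    | cons b t =>
      rw [List.getLast?_cons_cons, ← ih]
      by_cases h : a = b
      · subst h
        rw [collapse_same]
      · rw [collapse_ne h]
        obtain ⟨s, hs⟩ := exists_collapse b t
        rw [hs, List.getLast?_cons_cons]

theorem collapse_mid (s : List α) (A : α) (t : List α) :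
    collapse (s ++ A :: A :: t) = collapse (s ++ A :: t) := by
  induction s with
  | nil => exact collapse_same A t
  | cons x s ih =>
    cases s with
    | nil =>
      simp only [List.cons_append, List.nil_append]
      by_cases h : x = A
      · subst h
        rw [collapse_same, collapse_same]
      · rw [collapse_ne h, collapse_ne h, collapse_same]
    | cons y s =>
      simp only [List.cons_append] at ih ⊢
      by_cases h : x = y
      · subst h
        rw [collapse_same, collapse_same, ih]
      · rw [collapse_ne h, collapse_ne h, ih]

theorem collapse_block (s : List α) (A : α) (m t : List α) (hm : ∀ x ∈ m, x = A) :
    collapse (s ++ A :: (m ++ A :: t)) = collapse (s ++ A :: t) := by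
  induction m with
  | nil => exact collapse_mid s A t
  | cons x m ih =>
    obtain rfl := hm x (by simp)
    rw [List.cons_append, collapse_mid]
    exact ih (fun y hy => hm y (by simp [hy]))

theorem exists_repeat (l : List α) (h : ¬ l.Nodup) :
    ∃ s a m t, l = s ++ a :: (m ++ a :: t) ∧ (a :: m).Nodup := by
  induction l with
  | nil => simp at h
  | cons x xs ih =>
    by_cases hx : xs.Nodup
    · have hm : x ∈ xs := by
        by_contra hc
        exact h (List.nodup_cons.2 ⟨hc, hx⟩)
      obtain ⟨m, t, rfl⟩ := List.append_of_mem hm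
      refine ⟨[], x, m, t, rfl, ?_⟩
      rw [List.nodup_append] at hx
      refine List.nodup_cons.2 ⟨fun hc => hx.2.2 x hc x (by simp) rfl, hx.1⟩
    · obtain ⟨s, a, m, t, rfl, hn⟩ := ih hx
      exact ⟨x :: s, a, m, t, rfl, hn⟩

end Collapse

theorem walk_split {E : V → V → Prop} {i j a : V} (s t : List V) :
    IsWalk E i j (s ++ a :: t) ↔ IsWalk E i a (s ++ [a]) ∧ IsWalk E a j (a :: t) := by
  simp only [IsWalk, List.Chain']
  rw [List.isChain_split, List.getLast?_append_of_ne_nil s (List.cons_ne_nil a t),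
    List.getLast?_append_of_ne_nil s (List.cons_ne_nil a [])]
  have hh : (s ++ a :: t).head? = (s ++ [a]).head? := by cases s <;> rfl
  rw [hh]
  simp only [List.head?_cons, List.getLast?_singleton, true_and]
  tauto

theorem condPath_of_walk {E : V → V → Prop} {i j : V} {l : List V} (h : IsWalk E i j l) :
    IsCondPath E i j (collapse (l.map (sccOf E))) := by
  refine ⟨?_, ?_, ?_, ?_, ?_⟩
  · rw [head_collapse, List.head?_map, h.1]; rfl
  · rw [last_collapse, List.getLast?_map, h.2.1]; rfl
  · change List.IsChain _ _
    induction l generalizing i with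
    | nil => simp [collapse_nil]
    | cons a t ih =>
      cases t with
      | nil => simp [collapse_singleton]
      | cons b t =>
        obtain ⟨rfl, hab, hw⟩ := isWalk_cons_cons.1 h
        have := ih hw
        simp only [List.map_cons] at this ⊢
        by_cases hs : sccOf E a = sccOf E b
        · rw [hs, collapse_same]; exact this
        · rw [collapse_ne hs]
          obtain ⟨r, hr⟩ := exists_collapse (sccOf E b) (t.map (sccOf E))
          rw [hr] at this ⊢
          exact List.isChain_cons_cons.2
            ⟨⟨hs, a, self_mem_scc E a, b, self_mem_scc E b, hab⟩, this⟩
  · induction l generalizing i with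
    | nil => simp [collapse_nil]
    | cons a t ih =>
      cases t with
      | nil => simp [collapse_singleton]
      | cons b t =>
        obtain ⟨rfl, hab, hw⟩ := isWalk_cons_cons.1 h
        have := ih hw
        simp only [List.map_cons] at this ⊢
        by_cases hs : sccOf E a = sccOf E b
        · rw [hs, collapse_same]; exact this
        · rw [collapse_ne hs]
          refine List.nodup_cons.2 ⟨fun hc => hs ?_, this⟩
          rw [mem_collapse, ← List.map_cons, List.mem_map] at hc
          obtain ⟨v, hv, hva⟩ := hc
          obtain ⟨⟨x, hx⟩, -⟩ := hw_mem hw hv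
          have hv' : v ∈ sccOf E a := hva ▸ self_mem_scc E v
          obtain ⟨-, y, hy⟩ := mem_scc.1 hv'
          exact scc_eq (hw_edge hab) (hw_add hx hy)
  · intro X hX
    rw [mem_collapse, List.mem_map] at hX
    obtain ⟨v, -, rfl⟩ := hX
    exact ⟨v, rfl⟩

/-- One reduction step: a walk with a repeated vertex can be shortened by a cycle. -/
theorem reduce_step {E : V → V → Prop} {i j : V} {l : List V} (h : IsWalk E i j l)
    (hn : ¬ l.Nodup) : ∃ l' X c, IsWalk E i j l' ∧ X ∈ collapse (l.map (sccOf E)) ∧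
      IsCycleIn E X c ∧ l.length = l'.length + c ∧
      collapse (l'.map (sccOf E)) = collapse (l.map (sccOf E)) := by
  obtain ⟨s, a, m, t, rfl, hm⟩ := exists_repeat l hn
  obtain ⟨h1, h2⟩ := (walk_split _ _).1 h
  rw [← List.cons_append] at h2
  obtain ⟨h3, h4⟩ := (walk_split _ _).1 h2
  have hscc : ∀ u ∈ a :: m ++ [a], sccOf E u = sccOf E a := by
    intro u hu
    obtain ⟨⟨x, hx⟩, ⟨y, hy⟩⟩ := hw_mem h3 hu
    exact scc_eq hy hx
  refine ⟨s ++ a :: t, sccOf E a, m.length + 1, (walk_split _ _).2 ⟨h1, h4⟩, ?_, ?_, ?_, ?_⟩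
  · rw [mem_collapse, List.mem_map]
    exact ⟨a, by simp, rfl⟩
  · refine ⟨a, a :: m ++ [a], h3, by simp, by omega, ?_, ?_⟩
    · rw [List.dropLast_concat]; exact hm
    · intro u hu
      rw [← hscc u hu]
      exact self_mem_scc E u
  · simp; omega
  · simp only [List.map_append, List.map_cons]
    rw [collapse_block]
    intro x hx
    obtain ⟨u, hu, rfl⟩ := List.mem_map.1 hx
    exact hscc u (by simp [hu])

theorem reduce {E : V → V → Prop} {i j : V} (L : List (Set V)) (d : ℕ)
    (hd : ∀ X ∈ L, ∀ c, IsCycleIn E X c → d ∣ c) (n : ℕ) :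
    ∀ l : List V, l.length = n → IsWalk E i j l → InClass E L l →
    ∃ p, IsPath E i j p ∧ InClass E L p ∧ (p.length - 1) % d = (l.length - 1) % d := by
  induction n using Nat.strong_induction_on with
  | _ n ih =>
    intro l hl hw hc
    by_cases hn : l.Nodup
    · exact ⟨l, ⟨hw, hn⟩, hc, rfl⟩
    · obtain ⟨l', X, c, hw', hX, hcyc, hlen, hcol⟩ := reduce_step hw hn
      have hc' : InClass E L l' := hcol.trans hc
      have hcpos : 0 < c := by
        obtain ⟨_, _, _, _, h, _⟩ := hcyc
        exact h
      obtain ⟨p, hp, hpc, hpl⟩ := ih l'.length (by omega) l' rfl hw' hc'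
      refine ⟨p, hp, hpc, hpl.trans ?_⟩
      have hpos : 0 < l'.length := by
        cases l' with
        | nil => exact absurd hw' isWalk_nil
        | cons a t => simp
      obtain ⟨q, rfl⟩ := hd X (hc ▸ hX) c hcyc
      rw [show l.length - 1 = l'.length - 1 + d * q by omega, Nat.add_mul_mod_self_left]

theorem walk_insert {E : V → V → Prop} {i j v : V} {n : ℕ} (hn : HasWalk E n v v) (l : List V)
    (h : IsWalk E i j l) (hv : v ∈ l) :
    ∃ l', IsWalk E i j l' ∧ l ⊆ l' ∧ l'.length = l.length + n := by
  obtain ⟨s, t, rfl⟩ := List.append_of_mem hv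
  obtain ⟨h1, h2⟩ := (walk_split _ _).1 h
  obtain ⟨c, hc, hcl⟩ := hn
  have h3 := walk_append _ _ h1 (walk_append _ _ hc h2)
  cases c with
  | nil => exact absurd hc isWalk_nil
  | cons b c =>
    refine ⟨_, h3, ?_, ?_⟩
    · intro x hx
      simp at hx ⊢
      tauto
    · simp at hcl ⊢
      omega

theorem pump {E : V → V → Prop} {i j : V} {p : List V} (hp : IsWalk E i j p) (n : ℕ)
    (hn : n ∈ AddSubmonoid.closure {n | ∃ v ∈ p, HasWalk E n v v}) :
    ∃ l', IsWalk E i j l' ∧ p ⊆ l' ∧ l'.length = p.length + n := by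
  induction hn using AddSubmonoid.closure_induction_left with
  | zero => exact ⟨p, hp, fun _ h => h, rfl⟩
  | add_left x hx y hy ih =>
    obtain ⟨l, hl, hs, hlen⟩ := ih
    obtain ⟨v, hv, hw⟩ := hx
    obtain ⟨l', hl', hs', hlen'⟩ := walk_insert hw l hl (hs hv)
    exact ⟨l', hl', fun _ h => hs' (hs h), by omega⟩

theorem pump_all {E : V → V → Prop} {i j : V} {L : List (Set V)} {p : List V} {d : ℕ}
    (hp : IsWalk E i j p) (hc : InClass E L p)
    (hd : IsGCDSet {m : ℕ | ∃ X ∈ L, IsT2 E X ∧ ImprimIndex E X m} d) :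
    ∃ N, ∀ n ≥ N, d ∣ n → HasWalk E (p.length - 1 + n) i j := by
  obtain ⟨N, hN⟩ := Nat.exists_mem_closure_of_ge {n | ∃ v ∈ p, HasWalk E n v v}
  refine ⟨N, fun n hn hdn => ?_⟩
  have key : Nat.setGcd {n | ∃ v ∈ p, HasWalk E n v v} ∣ d := by
    refine hd.2 _ ?_
    rintro m ⟨X, hX, -, hm⟩
    refine hm.2 _ ?_
    rintro c ⟨u, l, hw, hl, -, -, hlX⟩
    rw [← hc, mem_collapse, List.mem_map] at hX
    obtain ⟨v, hv, rfl⟩ := hX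
    have hul : u ∈ l := List.mem_of_mem_head? hw.1
    obtain ⟨⟨x, hx⟩, ⟨y, hy⟩⟩ := mem_scc.1 (hlX u hul)
    have hcw : HasWalk E c u u := ⟨l, hw, hl⟩
    have d1 := Nat.setGcd_dvd_of_mem (s := {n | ∃ v ∈ p, HasWalk E n v v})
      ⟨v, hv, hw_add hx hy⟩
    have d2 := Nat.setGcd_dvd_of_mem (s := {n | ∃ v ∈ p, HasWalk E n v v})
      ⟨v, hv, hw_add hx (hw_add hcw hy)⟩
    rw [show x + (c + y) = (x + y) + c by ring] at d2
    exact (Nat.dvd_add_right d1).1 d2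
  obtain ⟨l', hl', -, hlen⟩ := pump hp n (hN n hn (key.trans hdn))
  have hpos : 0 < p.length := by
    cases p with
    | nil => exact absurd hp isWalk_nil
    | cons a t => simp
  exact ⟨l', hl', by omega⟩

theorem exists_imprim (E : V → V → Prop) (X : Set V) : ∃ m, ImprimIndex E X m :=
  ⟨Nat.setGcd {k | IsCycleIn E X k}, fun _ h => Nat.setGcd_dvd_of_mem h,
    fun _ h => Nat.dvd_setGcd_iff.2 h⟩

theorem gcd_dvd_cycle {E : V → V → Prop} {L : List (Set V)} {d : ℕ}
    (hL : ∀ X ∈ L, IsSCC E X)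
    (hd : IsGCDSet {m : ℕ | ∃ X ∈ L, IsT2 E X ∧ ImprimIndex E X m} d) :
    ∀ X ∈ L, ∀ c, IsCycleIn E X c → d ∣ c := by
  intro X hX c hc
  obtain ⟨m, hm⟩ := exists_imprim E X
  exact (hd.1 m ⟨X, hX, ⟨hL X hX, c, hc⟩, hm⟩).trans (hm.1 c hc)

theorem stmt7 [Fintype V] (E : V → V → Prop) (i j : V)
    -- `Ps` enumerates (without repetition) all paths in the condensation digraph
    -- from the SCC of `i` to the SCC of `j`
    (K : ℕ) (Ps : Fin K → List (Set V))
    (hPs : ∀ k : Fin K, IsCondPath E i j (Ps k))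
    (hPsInj : Function.Injective Ps)
    (hPsSurj : ∀ L : List (Set V), IsCondPath E i j L → ∃ k : Fin K, Ps k = L)
    -- `ηk k` is the gcd of the indices of imprimitivity of the T2SCCs on `Ps k`
    -- (it is forced to be `0` when there is no T2SCC on `Ps k`)
    (ηk : Fin K → ℕ)
    (hηk : ∀ k : Fin K,
      IsGCDSet {m : ℕ | ∃ X ∈ Ps k, IsT2 E X ∧ ImprimIndex E X m} (ηk k))
    -- `πk k` is the set of residues mod `ηk k` of the lengths of the paths from
    -- `i` to `j` in the class of `Ps k`, with `πk k = ∅` when `ηk k = 0`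
    (πk : Fin K → Set ℕ)
    (hπk0 : ∀ k : Fin K, ηk k = 0 → πk k = ∅)
    (hπk : ∀ k : Fin K, ηk k ≠ 0 →
      πk k = {r : ℕ | ∃ l : List V, IsPath E i j l ∧ InClass E (Ps k) l ∧
        (l.length - 1) % ηk k = r})
    -- `ηbar` is the lcm of the nonzero `ηk k`
    (ηbar : ℕ)
    (hηbar : IsLCMSet {m : ℕ | m ≠ 0 ∧ ∃ k : Fin K, ηk k = m} ηbar)
    -- `πbar` is the union over `k` of `π̃k := {a + b·ηk k | a ∈ πk k, 0 ≤ b ≤ ηbar/ηk k - 1}`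
    (πbar : Set ℕ)
    (hπbar : πbar = ⋃ k : Fin K,
      if ηk k = 0 then (∅ : Set ℕ)
      else {c : ℕ | ∃ a ∈ πk k, ∃ b : ℕ, b ≤ ηbar / ηk k - 1 ∧ c = a + b * ηk k}) :
    -- the pair (i,j) is primitive iff `πbar` is a complete residue system mod `ηbar`
    ((rho E i j).Infinite ∧ (sigmaSet E i j).Finite) ↔ πbar = Set.Iio ηbar := by
  have hbar : 0 < ηbar := by
    refine Nat.pos_of_dvd_of_pos (hηbar.2 (∏ k, if ηk k = 0 then 1 else ηk k) ?_) ?_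
    · rintro s ⟨hs, k, rfl⟩
      have := Finset.dvd_prod_of_mem (fun k => if ηk k = 0 then 1 else ηk k) (Finset.mem_univ k)
      simpa [hs] using this
    · refine Finset.prod_pos fun k _ => ?_
      split_ifs <;> omega
  have hdvd : ∀ k, ηk k ≠ 0 → ηk k ∣ ηbar := fun k hk => hηbar.1 _ ⟨hk, k, rfl⟩
  have hmem : ∀ c, c ∈ πbar ↔ ∃ k, ηk k ≠ 0 ∧ ∃ a ∈ πk k, ∃ b, b ≤ ηbar / ηk k - 1 ∧
      c = a + b * ηk k := by
    intro c
    rw [hπbar, Set.mem_iUnion]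
    refine exists_congr fun k => ?_
    split_ifs with hk <;> simp [hk]
  constructor
  · rintro ⟨-, hσ⟩
    ext r
    rw [hmem, Set.mem_Iio]
    constructor
    · rintro ⟨k, hk, a, ha, b, hb, rfl⟩
      rw [hπk k hk] at ha
      obtain ⟨l, -, -, rfl⟩ := ha
      have h1 := Nat.mod_lt (l.length - 1) (Nat.pos_of_ne_zero hk)
      obtain ⟨q, hq⟩ := hdvd k hk
      have hqpos : 0 < q := Nat.pos_of_ne_zero (by rintro rfl; omega)
      rw [hq, Nat.mul_div_cancel_left _ (Nat.pos_of_ne_zero hk)] at hb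
      calc _ < ηk k + b * ηk k := by omega
        _ = ηk k * (b + 1) := by ring
        _ ≤ ηk k * q := Nat.mul_le_mul_left _ (by omega)
        _ = ηbar := hq.symm
    · intro hr
      obtain ⟨B, hB⟩ := hσ.bddAbove
      set N := B + Fintype.card V + 1 with hN
      set n := r + ηbar * N with hn
      have hnN : N ≤ n := by nlinarith
      have hwalk : HasWalk E n i j := by
        by_contra hc
        have := hB (a := n) ⟨by omega, fun h => hc h.2⟩
        omega
      obtain ⟨l, hw, hlen⟩ := hwalk
      have hnd : ¬ l.Nodup := fun h => by
        have := h.length_le_card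
        omega
      obtain ⟨k, hk⟩ := hPsSurj _ (condPath_of_walk hw)
      have hcyc := gcd_dvd_cycle (hPs k).2.2.2.2 (hηk k)
      have hk0 : ηk k ≠ 0 := by
        obtain ⟨l', X, c, -, hX, hc, -, -⟩ := reduce_step hw hnd
        have hcd := hcyc X (hk ▸ hX) c hc
        obtain ⟨_, _, _, _, hcpos, _⟩ := hc
        exact (Nat.pos_of_dvd_of_pos hcd hcpos).ne'
      obtain ⟨p, hp, hpc, hpl⟩ := reduce (Ps k) (ηk k) hcyc _ l rfl hw hk.symm
      refine ⟨k, hk0, r % ηk k, ?_, r / ηk k, ?_, ?_⟩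
      · rw [hπk k hk0]
        refine ⟨p, hp, hpc, hpl.trans ?_⟩
        obtain ⟨q, hq⟩ := hdvd k hk0
        rw [hlen, Nat.add_sub_cancel, hn, hq, mul_assoc, Nat.add_mul_mod_self_left]
      · have : r / ηk k < ηbar / ηk k := Nat.div_lt_div_of_lt_of_dvd (hdvd k hk0) hr
        omega
      · rw [mul_comm, Nat.mod_add_div]
  · intro h
    have hall : ∀ r : Fin ηbar, ∃ N, ∀ n ≥ N, n % ηbar = r → HasWalk E n i j := by
      intro r
      have hr : (r : ℕ) ∈ πbar := by rw [h]; exact r.2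
      obtain ⟨k, hk, a, ha, b, -, hrab⟩ := (hmem _).1 hr
      rw [hπk k hk] at ha
      obtain ⟨p, hp, hpc, rfl⟩ := ha
      obtain ⟨N, hN⟩ := pump_all hp.1 hpc (hηk k)
      refine ⟨p.length - 1 + N, fun n hn hnr => ?_⟩
      have hle : p.length - 1 ≤ n := by omega
      have hmod : (p.length - 1) ≡ n [MOD ηk k] := by
        have e1 : n ≡ (r : ℕ) [MOD ηk k] := by
          have : n ≡ (r : ℕ) [MOD ηbar] := by
            rw [Nat.ModEq, hnr, Nat.mod_eq_of_lt r.2]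
          exact this.of_dvd (hdvd k hk)
        refine (e1.trans ?_).symm
        rw [hrab, Nat.ModEq, Nat.add_mul_mod_self_right, Nat.mod_mod]
      have := hN (n - (p.length - 1)) (by omega) ((Nat.modEq_iff_dvd' hle).1 hmod)
      rwa [Nat.add_sub_cancel' hle] at this
    choose N hN using hall
    have hbig : ∀ n, ∑ r, N r < n → n ∈ rho E i j := by
      intro n hn
      refine ⟨by omega, hN ⟨n % ηbar, Nat.mod_lt _ hbar⟩ n ?_ rfl⟩
      exact (Finset.single_le_sum (f := N) (fun _ _ => Nat.zero_le _)
        (Finset.mem_univ _)).trans hn.le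
    constructor
    · exact (Set.Ioi_infinite (∑ r, N r)).mono fun n hn => hbig n hn
    · refine (Set.finite_Iic (∑ r, N r)).subset fun n hn => ?_
      by_contra hc
      exact hn.2 (hbig n (not_le.1 hc))

end BCNPaper7
end

section
/- With the condensation notation below, for any ordered pair of vertices (i, j) of a finite directed graph G, the pair (i, j) belongs to the imprimitive category — i.e., both the set of reachable time steps ρ(i,j) and the set of unreachable time steps σ(i,j) are infinite — if and only if π̄_{ij} ≠ ∅ and π̄_{ij} ≠ {0, 1, ..., η̄_{ij} − 1}. -/
namespace BCNPaper8

variable {V : Type*}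

/-- A walk from `i` to `j` encoded as a nonempty list of visited vertices. -/
def IsWalk (E : V → V → Prop) (i j : V) (l : List V) : Prop :=
  l.head? = some i ∧ l.getLast? = some j ∧ l.Chain' E

/-- There is a walk of length exactly `k` from `i` to `j`. -/
def HasWalk (E : V → V → Prop) (k : ℕ) (i j : V) : Prop :=
  ∃ l : List V, IsWalk E i j l ∧ l.length = k + 1

/-- The set of reachable time steps ρ(i,j). -/
def rho (E : V → V → Prop) (i j : V) : Set ℕ :=
  {k | 0 < k ∧ HasWalk E k i j}

/-- The set of unreachable time steps σ(i,j). -/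
def sigmaSet (E : V → V → Prop) (i j : V) : Set ℕ :=
  {k | 0 < k ∧ k ∉ rho E i j}

/-- A path is a walk with pairwise distinct vertices. -/
def IsPath (E : V → V → Prop) (i j : V) (l : List V) : Prop :=
  IsWalk E i j l ∧ l.Nodup

/-- The strongly connected component of a vertex `i`. -/
def sccOf (E : V → V → Prop) (i : V) : Set V :=
  {v | v = i ∨ ((∃ k : ℕ, 0 < k ∧ HasWalk E k i v) ∧ (∃ k : ℕ, 0 < k ∧ HasWalk E k v i))}

/-- `X` is a strongly connected component of the graph. -/
def IsSCC (E : V → V → Prop) (X : Set V) : Prop :=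
  ∃ i : V, X = sccOf E i

/-- There is a cycle (closed walk of positive length `k` with no repeated vertices
other than its endpoints) all of whose vertices lie in `X`. -/
def IsCycleIn (E : V → V → Prop) (X : Set V) (k : ℕ) : Prop :=
  ∃ v : V, ∃ l : List V, IsWalk E v v l ∧ l.length = k + 1 ∧ 0 < k ∧
    l.dropLast.Nodup ∧ ∀ u ∈ l, u ∈ X

/-- `g` is the greatest common divisor of the set `S` of natural numbers
(`g = 0` if `S` is empty). -/
def IsGCDSet (S : Set ℕ) (g : ℕ) : Prop :=
  (∀ s ∈ S, g ∣ s) ∧ ∀ d : ℕ, (∀ s ∈ S, d ∣ s) → d ∣ g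

/-- `m` is the least common multiple of the set `S` of natural numbers
(`m = 1` if `S` is empty). -/
def IsLCMSet (S : Set ℕ) (m : ℕ) : Prop :=
  (∀ s ∈ S, s ∣ m) ∧ ∀ c : ℕ, (∀ s ∈ S, s ∣ c) → m ∣ c

/-- A type-2 SCC: an SCC containing a cycle of the graph. -/
def IsT2 (E : V → V → Prop) (X : Set V) : Prop :=
  IsSCC E X ∧ ∃ k : ℕ, IsCycleIn E X k

/-- `η` is the index of imprimitivity of the T2SCC `X`: the gcd of the lengths of
the cycles of the graph contained in `X`. -/
def ImprimIndex (E : V → V → Prop) (X : Set V) (η : ℕ) : Prop :=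
  IsGCDSet {k : ℕ | IsCycleIn E X k} η

/-- The edge relation of the condensation digraph. -/
def CondE (E : V → V → Prop) (X Y : Set V) : Prop :=
  X ≠ Y ∧ ∃ u ∈ X, ∃ v ∈ Y, E u v

/-- `L` is a path in the condensation digraph from the SCC of `i` to the SCC of `j`. -/
def IsCondPath (E : V → V → Prop) (i j : V) (L : List (Set V)) : Prop :=
  L.head? = some (sccOf E i) ∧ L.getLast? = some (sccOf E j) ∧
  L.Chain' (CondE E) ∧ L.Nodup ∧ ∀ X ∈ L, IsSCC E X

/-- Remove consecutive repetitions from a list. -/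
noncomputable def collapse {α : Type*} (l : List α) : List α :=
  letI : DecidableRel (α := α) (· ≠ ·) := Classical.decRel _
  l.destutter (· ≠ ·)

/-- A walk `l` in `G` belongs to the class of the condensation path `L` if the
sequence of SCCs of its vertices, with consecutive repetitions removed, is `L`. -/
def InClass (E : V → V → Prop) (L : List (Set V)) (l : List V) : Prop :=
  collapse (l.map (sccOf E)) = L

theorem hasWalk_zero (E : V → V → Prop) (i j : V) : HasWalk E 0 i j ↔ i = j := by
  constructor
  · rintro ⟨l, ⟨h1, h2, -⟩, h3⟩
    match l, h3 with
    | [a], _ => simp_all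
  · rintro rfl
    exact ⟨[i], ⟨by simp, by simp, List.isChain_singleton _⟩, by simp⟩

theorem isWalk_cons_cons (E : V → V → Prop) (i j x y : V) (s : List V) :
    IsWalk E i j (x :: y :: s) ↔ x = i ∧ E x y ∧ IsWalk E y j (y :: s) := by
  unfold IsWalk List.Chain'
  simp only [List.head?_cons, Option.some.injEq, List.getLast?_cons_cons, List.isChain_cons_cons]
  tauto

theorem hasWalk_succ (E : V → V → Prop) (n : ℕ) (i j : V) :
    HasWalk E (n + 1) i j ↔ ∃ y, E i y ∧ HasWalk E n y j := by
  constructor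
  · rintro ⟨l, h, h3⟩
    match l, h3 with
    | x :: y :: s, h3 =>
      rw [isWalk_cons_cons] at h
      obtain ⟨rfl, h1, h2⟩ := h
      exact ⟨y, h1, y :: s, h2, by simpa using h3⟩
  · rintro ⟨y, h1, l, h2, h3⟩
    match l, h3 with
    | z :: s, h3 =>
      have : z = y := by simpa using h2.1
      subst this
      exact ⟨i :: z :: s, (isWalk_cons_cons ..).2 ⟨rfl, h1, h2⟩, by simpa using h3⟩

theorem hasWalk_add {E : V → V → Prop} {m n : ℕ} {i j k : V}
    (h1 : HasWalk E m i j) (h2 : HasWalk E n j k) : HasWalk E (m + n) i k := by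
  induction m generalizing i with
  | zero => rw [hasWalk_zero] at h1; subst h1; simpa using h2
  | succ m ih =>
    rw [hasWalk_succ] at h1
    obtain ⟨y, hy, h⟩ := h1
    rw [Nat.add_right_comm, hasWalk_succ]
    exact ⟨y, hy, ih h⟩

/-- Reachability. -/
def Reach (E : V → V → Prop) (i j : V) : Prop := ∃ k, HasWalk E k i j

theorem Reach.rfl' {E : V → V → Prop} (i : V) : Reach E i i := ⟨0, (hasWalk_zero ..).2 rfl⟩

theorem Reach.trans' {E : V → V → Prop} {i j k : V} (h1 : Reach E i j) (h2 : Reach E j k) :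
    Reach E i k := by
  obtain ⟨a, ha⟩ := h1
  obtain ⟨b, hb⟩ := h2
  exact ⟨_, hasWalk_add ha hb⟩

theorem Reach.edge {E : V → V → Prop} {i j : V} (h : E i j) : Reach E i j :=
  ⟨1, (hasWalk_succ ..).2 ⟨j, h, (hasWalk_zero ..).2 rfl⟩⟩

theorem mem_sccOf {E : V → V → Prop} {i v : V} :
    v ∈ sccOf E i ↔ Reach E i v ∧ Reach E v i := by
  constructor
  · rintro (rfl | ⟨⟨a, -, ha⟩, ⟨b, -, hb⟩⟩)
    · exact ⟨Reach.rfl' _, Reach.rfl' _⟩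
    · exact ⟨⟨a, ha⟩, ⟨b, hb⟩⟩
  · rintro ⟨⟨a, ha⟩, ⟨b, hb⟩⟩
    by_cases hv : v = i
    · exact Or.inl hv
    · refine Or.inr ⟨⟨a, Nat.pos_of_ne_zero ?_, ha⟩, ⟨b, Nat.pos_of_ne_zero ?_, hb⟩⟩
      · rintro rfl
        exact hv ((hasWalk_zero ..).1 ha).symm
      · rintro rfl
        exact hv ((hasWalk_zero ..).1 hb)

theorem sccOf_eq {E : V → V → Prop} {i v : V} :
    sccOf E i = sccOf E v ↔ Reach E i v ∧ Reach E v i := by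
  constructor
  · intro h
    have : v ∈ sccOf E v := Or.inl rfl
    rw [← h] at this
    exact mem_sccOf.1 this
  · rintro ⟨h1, h2⟩
    ext w
    rw [mem_sccOf, mem_sccOf]
    exact ⟨fun ⟨a, b⟩ => ⟨h2.trans' a, b.trans' h1⟩, fun ⟨a, b⟩ => ⟨h1.trans' a, b.trans' h2⟩⟩

theorem collapse_nil {α : Type*} : collapse ([] : List α) = [] := by simp [collapse]

theorem collapse_single {α : Type*} (a : α) : collapse [a] = [a] := by simp [collapse]

theorem collapse_same {α : Type*} (a : α) (l : List α) :
    collapse (a :: a :: l) = collapse (a :: l) := by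
  simp [collapse, List.destutter]

theorem collapse_ne {α : Type*} {a b : α} (h : a ≠ b) (l : List α) :
    collapse (a :: b :: l) = a :: collapse (b :: l) := by
  simp [collapse, List.destutter, h]

theorem collapse_head {α : Type*} (l : List α) : (collapse l).head? = l.head? := by
  match l with
  | [] => simp [collapse_nil]
  | [a] => simp [collapse_single]
  | a :: b :: l =>
    by_cases h : a = b
    · subst h
      rw [collapse_same, collapse_head]; rfl
    · rw [collapse_ne h]; rfl

theorem mem_collapse {α : Type*} (l : List α) (x : α) : x ∈ collapse l ↔ x ∈ l := by
  match l with
  | [] => simp [collapse_nil]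
  | [a] => simp [collapse_single]
  | a :: b :: l =>
    by_cases h : a = b
    · subst h
      rw [collapse_same, mem_collapse]; simp
    · rw [collapse_ne h, List.mem_cons, mem_collapse, List.mem_cons (a := x) (b := a)]

theorem collapse_getLast {α : Type*} (l : List α) : (collapse l).getLast? = l.getLast? := by
  match l with
  | [] => simp [collapse_nil]
  | [a] => simp [collapse_single]
  | a :: b :: l =>
    by_cases h : a = b
    · subst h
      rw [collapse_same, collapse_getLast]; simp
    · rw [collapse_ne h, List.getLast?_cons_cons, ← collapse_getLast (b :: l)]
      have : collapse (b :: l) ≠ [] := by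
        intro h0
        have := collapse_head (b :: l)
        simp [h0] at this
      obtain ⟨c, m, hc⟩ := List.exists_cons_of_ne_nil this
      rw [hc, List.getLast?_cons_cons]

theorem collapse_const {α : Type*} (c : α) (t s : List α) (h : ∀ x ∈ t, x = c) :
    collapse (c :: t ++ c :: s) = collapse (c :: s) := by
  induction t with
  | nil => simp [collapse_same]
  | cons a t ih =>
    have ha : a = c := h a (by simp)
    subst ha
    have := ih (fun x hx => h x (by simp [hx]))
    simp only [List.cons_append] at this ⊢
    rw [collapse_same, this]

theorem reach_of_mem {E : V → V → Prop} {i j z : V} {l : List V} (h : IsWalk E i j l)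
    (hz : z ∈ l) : Reach E i z ∧ Reach E z j := by
  induction l generalizing i z with
  | nil => simp at hz
  | cons x t ih =>
    have hx : x = i := by simpa using h.1
    subst hx
    match t with
    | [] =>
      have h2 := h.2.1
      simp at h2 hz
      subst h2; subst hz
      exact ⟨Reach.rfl' _, Reach.rfl' _⟩
    | y :: s =>
      rw [isWalk_cons_cons] at h
      obtain ⟨-, he, hw⟩ := h
      rcases List.mem_cons.1 hz with rfl | hz
      · exact ⟨Reach.rfl' _, (Reach.edge he).trans' (ih hw (by simp)).2⟩
      · exact ⟨(Reach.edge he).trans' (ih hw hz).1, (ih hw hz).2⟩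

theorem isCondPath_collapse {E : V → V → Prop} {i j : V} {l : List V} (h : IsWalk E i j l) :
    IsCondPath E i j (collapse (l.map (sccOf E))) := by
  refine ⟨?_, ?_, ?_, ?_, ?_⟩
  · rw [collapse_head, List.head?_map, h.1]; rfl
  · rw [collapse_getLast, List.getLast?_map, h.2.1]; rfl
  · unfold List.Chain'
    induction l generalizing i with
    | nil => simp [collapse_nil]
    | cons x t ih =>
      match t with
      | [] => simp [collapse_single]
      | y :: s =>
        rw [isWalk_cons_cons] at h
        obtain ⟨-, he, hw⟩ := h
        have := ih hw
        simp only [List.map_cons] at this ⊢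
        by_cases hxy : sccOf E x = sccOf E y
        · rw [hxy, collapse_same]; exact this
        · rw [collapse_ne hxy]
          have hh := collapse_head (sccOf E y :: s.map (sccOf E))
          obtain ⟨c, m, hc⟩ : ∃ c m, collapse (sccOf E y :: s.map (sccOf E)) = c :: m := by
            apply List.exists_cons_of_ne_nil
            intro h0
            simp [h0] at hh
          rw [hc] at this hh ⊢
          have : c = sccOf E y := by simpa using hh
          subst this
          refine List.isChain_cons_cons.2 ⟨⟨hxy, x, Or.inl rfl, y, Or.inl rfl, he⟩, by assumption⟩
  · induction l generalizing i with
    | nil => simp [collapse_nil]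
    | cons x t ih =>
      match t with
      | [] => simp [collapse_single]
      | y :: s =>
        rw [isWalk_cons_cons] at h
        obtain ⟨-, he, hw⟩ := h
        have := ih hw
        simp only [List.map_cons] at this ⊢
        by_cases hxy : sccOf E x = sccOf E y
        · rw [hxy, collapse_same]; exact this
        · rw [collapse_ne hxy]
          refine List.nodup_cons.2 ⟨?_, this⟩
          rw [mem_collapse, ← List.map_cons, List.mem_map]
          rintro ⟨z, hz, hzx⟩
          apply hxy
          rw [sccOf_eq] at hzx ⊢
          exact ⟨Reach.edge he, (reach_of_mem hw hz).1.trans' hzx.1⟩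
  · intro X hX
    rw [mem_collapse, List.mem_map] at hX
    obtain ⟨v, -, rfl⟩ := hX
    exact ⟨v, rfl⟩

/-- Reduction of a walk to a path in the same class. -/
theorem exists_path {E : V → V → Prop} {i j : V} {l : List V} (h : IsWalk E i j l) (η : ℕ)
    (hη : ∀ v ∈ l, ∀ k, IsCycleIn E (sccOf E v) k → η ∣ k) :
    ∃ l', IsPath E i j l' ∧ collapse (l'.map (sccOf E)) = collapse (l.map (sccOf E)) ∧
      (∀ v ∈ l', v ∈ l) ∧ ∃ c, l.length = l'.length + η * c := by
  induction l generalizing i with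
  | nil => simp [IsWalk] at h
  | cons x t ih =>
    have hx : x = i := by simpa using h.1
    subst hx
    match t with
    | [] => exact ⟨[x], ⟨h, by simp⟩, rfl, by simp, 0, by simp⟩
    | y :: s =>
      obtain ⟨-, he, hw⟩ := (isWalk_cons_cons ..).1 h
      obtain ⟨t', ⟨hp1, hp2⟩, hc, hsub, c, hlen⟩ := ih hw (fun v hv => hη v (by simp [hv]))
      obtain ⟨s', rfl⟩ : ∃ s', t' = y :: s' := by
        match t', hp1.1 with
        | a :: s', h => exact ⟨s', by simpa using h⟩
      have hwx : IsWalk E x j (x :: y :: s') := (isWalk_cons_cons ..).2 ⟨rfl, he, hp1⟩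
      have hcx : collapse ((x :: y :: s').map (sccOf E)) =
          collapse ((x :: y :: s).map (sccOf E)) := by
        simp only [List.map_cons] at hc ⊢
        by_cases hxy : sccOf E x = sccOf E y
        · rw [hxy, collapse_same, collapse_same, hc]
        · rw [collapse_ne hxy, collapse_ne hxy, hc]
      by_cases hxm : x ∈ y :: s'
      · obtain ⟨t1, t2, ht⟩ := List.append_of_mem hxm
        rw [ht] at hwx hcx hlen hsub hp2
        have hw1 : IsWalk E x x (x :: t1 ++ [x]) := by
          refine ⟨by simp, List.getLast?_concat, ?_⟩
          have h3 : List.IsChain E ((x :: t1 ++ [x]) ++ t2) := by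
              have h4 := hwx.2.2
              unfold List.Chain' at h4
              simpa using h4
          exact h3.left_of_append
        have hw2 : IsWalk E x j (x :: t2) := by
          refine ⟨by simp, ?_, ?_⟩
          · have := hwx.2.1
            rw [← List.cons_append, List.getLast?_append] at this
            simpa [List.getLast?_cons] using this
          · have h3 : List.IsChain E ((x :: t1) ++ (x :: t2)) := by
              have h4 := hwx.2.2
              unfold List.Chain' at h4
              simpa using h4
            exact h3.right_of_append
        have hscc : ∀ v ∈ x :: t1 ++ [x], sccOf E v = sccOf E x := by
          intro v hv
          have := reach_of_mem hw1 hv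
          exact sccOf_eq.2 ⟨this.2, this.1⟩
        have hcyc : IsCycleIn E (sccOf E x) (t1.length + 1) := by
          refine ⟨x, x :: t1 ++ [x], hw1, by simp, by simp, ?_, ?_⟩
          · rw [List.dropLast_concat]
            rw [List.nodup_append] at hp2
            refine List.nodup_cons.2 ⟨fun hx1 => hp2.2.2 x hx1 x (by simp) rfl, hp2.1⟩
          · intro u hu
            rw [← hscc u hu]
            exact Or.inl rfl
        obtain ⟨d, hd⟩ := hη x (by simp) _ hcyc
        refine ⟨x :: t2, ⟨hw2, ?_⟩, ?_, ?_, c + d, ?_⟩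
        · exact (List.nodup_append.1 hp2).2.1
        · rw [← hcx]
          simp only [List.map_cons, List.map_append]
          rw [← List.cons_append, collapse_const]
          intro X hX
          obtain ⟨v, hv, rfl⟩ := List.mem_map.1 hX
          exact hscc v (by simp [hv])
        · intro v hv
          exact List.mem_cons_of_mem _ (hsub v (by simp only [List.mem_append]; exact Or.inr hv))
        · simp only [List.length_cons, List.length_append] at hlen ⊢
          rw [Nat.mul_add, ← hd]
          omega
      · refine ⟨x :: y :: s', ⟨hwx, List.nodup_cons.2 ⟨hxm, hp2⟩⟩, hcx, ?_, c, ?_⟩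
        · intro v hv
          rcases List.mem_cons.1 hv with rfl | hv
          · simp
          · exact List.mem_cons_of_mem _ (hsub v hv)
        · simp only [List.length_cons] at hlen ⊢
          omega

/-- Lengths of closed walks at `v`. -/
def closedM (E : V → V → Prop) (v : V) : AddSubmonoid ℕ where
  carrier := {k | HasWalk E k v v}
  zero_mem' := (hasWalk_zero ..).2 rfl
  add_mem' := fun h1 h2 => hasWalk_add h1 h2

/-- Sums of lengths of closed walks at vertices of a list. -/
def listM (E : V → V → Prop) : List V → AddSubmonoid ℕ
  | [] => ⊥
  | x :: t => closedM E x ⊔ listM E t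

theorem closedM_le {E : V → V → Prop} {v : V} {l : List V} (h : v ∈ l) :
    closedM E v ≤ listM E l := by
  induction l with
  | nil => simp at h
  | cons x t ih =>
    rcases List.mem_cons.1 h with rfl | h
    · exact le_sup_left
    · exact (ih h).trans le_sup_right

theorem hasWalk_listM {E : V → V → Prop} {i j : V} {l : List V} (h : IsWalk E i j l) {n : ℕ}
    (hn : n ∈ listM E l) : HasWalk E (l.length - 1 + n) i j := by
  induction l generalizing i n with
  | nil => simp [IsWalk] at h
  | cons x t ih =>
    have hx : x = i := by simpa using h.1
    subst hx
    obtain ⟨a, ha, b, hb, rfl⟩ := AddSubmonoid.mem_sup.1 hn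
    match t with
    | [] =>
      have h2 := h.2.1
      simp at h2
      subst h2
      have : b = 0 := by simpa [listM] using hb
      subst this
      have ha' : HasWalk E a x x := ha
      simpa using ha'
    | y :: s =>
      obtain ⟨-, he, hw⟩ := (isWalk_cons_cons ..).1 h
      have h1 := ih hw hb
      have h2 : HasWalk E ((y :: s).length - 1 + b + 1) x j := (hasWalk_succ ..).2 ⟨y, he, h1⟩
      have h3 := hasWalk_add (show HasWalk E a x x from ha) h2
      convert h3 using 1
      simp only [List.length_cons]
      omega

theorem eventually_walk {E : V → V → Prop} {i j : V} {l : List V} (h : IsWalk E i j l) {η : ℕ}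
    (hη : IsGCDSet {m : ℕ | ∃ X ∈ collapse (l.map (sccOf E)), IsT2 E X ∧ ImprimIndex E X m} η) :
    ∃ N, ∀ n ≥ N, n % η = (l.length - 1) % η → HasWalk E n i j := by
  obtain ⟨N, hN⟩ := Nat.exists_mem_closure_of_ge (listM E l : Set ℕ)
  refine ⟨N + l.length, fun n hn hmod => ?_⟩
  have hd : Nat.setGcd (listM E l : Set ℕ) ∣ η := by
    apply hη.2
    rintro m ⟨X, hX, -, him⟩
    rw [mem_collapse, List.mem_map] at hX
    obtain ⟨v, hv, rfl⟩ := hX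
    apply him.2
    rintro k ⟨w, c, hc, hck, -, -, hcX⟩
    have hw : w ∈ sccOf E v := hcX w (List.mem_of_mem_head? (by rw [hc.1]; simp))
    obtain ⟨⟨a, ha⟩, ⟨b, hb⟩⟩ := mem_sccOf.1 hw
    have h1 : Nat.setGcd (listM E l : Set ℕ) ∣ a + b :=
      Nat.setGcd_dvd_of_mem (closedM_le hv (hasWalk_add ha hb))
    have h2 : Nat.setGcd (listM E l : Set ℕ) ∣ a + k + b :=
      Nat.setGcd_dvd_of_mem (closedM_le hv (hasWalk_add (hasWalk_add ha ⟨c, hc, hck⟩) hb))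
    have : a + k + b = (a + b) + k := by omega
    rw [this] at h2
    exact (Nat.dvd_add_right h1).1 h2
  have hdvd : η ∣ n - (l.length - 1) :=
    (Nat.modEq_iff_dvd' (by omega)).1 (show (l.length - 1) ≡ n [MOD η] from hmod.symm)
  have := hN (n - (l.length - 1)) (by omega) (hd.trans hdvd)
  rw [AddSubmonoid.closure_eq] at this
  have := hasWalk_listM h this
  convert this using 1
  omega

theorem dvd_cycle {E : V → V → Prop} {L : List (Set V)} {η : ℕ}
    (hη : IsGCDSet {m : ℕ | ∃ X ∈ L, IsT2 E X ∧ ImprimIndex E X m} η) {v : V}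
    (hv : sccOf E v ∈ L) {k : ℕ} (hk : IsCycleIn E (sccOf E v) k) : η ∣ k := by
  have h1 : ImprimIndex E (sccOf E v) (Nat.setGcd {k | IsCycleIn E (sccOf E v) k}) :=
    ⟨fun s hs => Nat.setGcd_dvd_of_mem hs, fun d hd => Nat.dvd_setGcd_iff.2 hd⟩
  exact (hη.1 _ ⟨_, hv, ⟨⟨v, rfl⟩, k, hk⟩, h1⟩).trans (h1.1 _ hk)


theorem stmt8 [Fintype V] (E : V → V → Prop) (i j : V)
    -- `Ps` enumerates (without repetition) all paths in the condensation digraph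
    -- from the SCC of `i` to the SCC of `j`
    (K : ℕ) (Ps : Fin K → List (Set V))
    (hPs : ∀ k : Fin K, IsCondPath E i j (Ps k))
    (hPsInj : Function.Injective Ps)
    (hPsSurj : ∀ L : List (Set V), IsCondPath E i j L → ∃ k : Fin K, Ps k = L)
    -- `ηk k` is the gcd of the indices of imprimitivity of the T2SCCs on `Ps k`
    -- (it is forced to be `0` when there is no T2SCC on `Ps k`)
    (ηk : Fin K → ℕ)
    (hηk : ∀ k : Fin K,
      IsGCDSet {m : ℕ | ∃ X ∈ Ps k, IsT2 E X ∧ ImprimIndex E X m} (ηk k))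
    -- `πk k` is the set of residues mod `ηk k` of the lengths of the paths from
    -- `i` to `j` in the class of `Ps k`, with `πk k = ∅` when `ηk k = 0`
    (πk : Fin K → Set ℕ)
    (hπk0 : ∀ k : Fin K, ηk k = 0 → πk k = ∅)
    (hπk : ∀ k : Fin K, ηk k ≠ 0 →
      πk k = {r : ℕ | ∃ l : List V, IsPath E i j l ∧ InClass E (Ps k) l ∧
        (l.length - 1) % ηk k = r})
    -- `ηbar` is the lcm of the nonzero `ηk k`
    (ηbar : ℕ)
    (hηbar : IsLCMSet {m : ℕ | m ≠ 0 ∧ ∃ k : Fin K, ηk k = m} ηbar)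
    -- `πbar` is the union over `k` of `π̃k := {a + b·ηk k | a ∈ πk k, 0 ≤ b ≤ ηbar/ηk k - 1}`
    (πbar : Set ℕ)
    (hπbar : πbar = ⋃ k : Fin K,
      if ηk k = 0 then (∅ : Set ℕ)
      else {c : ℕ | ∃ a ∈ πk k, ∃ b : ℕ, b ≤ ηbar / ηk k - 1 ∧ c = a + b * ηk k}) :
    -- the pair (i,j) is imprimitive iff `πbar` is a nonempty proper subset of the
    -- complete residue system mod `ηbar`
    ((rho E i j).Infinite ∧ (sigmaSet E i j).Infinite) ↔
      (πbar ≠ ∅ ∧ πbar ≠ Set.Iio ηbar) := by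
  have hbar0 : 0 < ηbar := by
    apply Nat.pos_of_ne_zero
    rintro rfl
    have := hηbar.2 (∏ k : Fin K, if ηk k = 0 then 1 else ηk k) (by
      rintro s ⟨hs, k, rfl⟩
      refine dvd_trans (by simp [hs]) (Finset.dvd_prod_of_mem _ (Finset.mem_univ k)))
    rw [zero_dvd_iff, Finset.prod_eq_zero_iff] at this
    obtain ⟨k, -, hk⟩ := this
    split_ifs at hk <;> simp_all
  have hdvd : ∀ k, ηk k ≠ 0 → ηk k ∣ ηbar := fun k hk => hηbar.1 _ ⟨hk, k, rfl⟩
  have hmem : ∀ c, c ∈ πbar ↔ ∃ k, ηk k ≠ 0 ∧ c < ηbar ∧ ∃ l : List V, IsPath E i j l ∧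
      InClass E (Ps k) l ∧ c % ηk k = (l.length - 1) % ηk k := by
    intro c
    rw [hπbar, Set.mem_iUnion]
    refine exists_congr fun k => ?_
    by_cases hk : ηk k = 0
    · simp [hk]
    · obtain ⟨q, hq⟩ := hdvd k hk
      have hkp : 0 < ηk k := Nat.pos_of_ne_zero hk
      have hq0 : 0 < q := by
        apply Nat.pos_of_ne_zero
        rintro rfl
        omega
      have hdiv : ηbar / ηk k = q := by rw [hq, Nat.mul_div_cancel_left _ hkp]
      rw [if_neg hk, hπk k hk, hdiv]
      constructor
      · rintro ⟨a, ⟨l, h1, h2, rfl⟩, b, hb, rfl⟩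
        have := Nat.mod_lt (l.length - 1) hkp
        refine ⟨hk, ?_, l, h1, h2, ?_⟩
        · have hb' : b + 1 ≤ q := by omega
          have := Nat.mul_le_mul_left (ηk k) hb'
          rw [hq]
          nlinarith
        · simp
      · rintro ⟨-, hc, l, h1, h2, h3⟩
        refine ⟨_, ⟨l, h1, h2, rfl⟩, c / ηk k, ?_, ?_⟩
        · have : c / ηk k < q := Nat.div_lt_of_lt_mul (by rw [← hq]; exact hc)
          omega
        · rw [← h3, Nat.mul_comm, Nat.mod_add_div]
  have key1 : ∀ n, Fintype.card V < n → HasWalk E n i j → n % ηbar ∈ πbar := by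
    rintro n hn ⟨l, hl, hlen⟩
    obtain ⟨k, hk⟩ := hPsSurj _ (isCondPath_collapse hl)
    have hg := hηk k
    obtain ⟨l', hp, hc, -, c, hcl⟩ := exists_path hl (ηk k) (fun v hv m hm =>
      dvd_cycle hg (by rw [hk, mem_collapse]; exact List.mem_map_of_mem hv) hm)
    have hcard : l'.length ≤ Fintype.card V := hp.2.length_le_card
    have hne : ηk k ≠ 0 := by
      intro h0
      rw [h0] at hcl
      omega
    have hpos : 0 < l'.length := by
      match l', hp.1.1 with
      | a :: s, _ => simp
    refine (hmem _).2 ⟨k, hne, Nat.mod_lt _ hbar0, l', hp, hc.trans hk.symm, ?_⟩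
    rw [Nat.mod_mod_of_dvd _ (hdvd k hne)]
    have : n = l'.length - 1 + ηk k * c := by omega
    rw [this, Nat.add_mul_mod_self_left]
  have key2 : ∀ r, ∃ N, r ∈ πbar → ∀ n ≥ N, n % ηbar = r → HasWalk E n i j := by
    intro r
    by_cases hr : r ∈ πbar
    · obtain ⟨k, hk, hlt, l, hp, hc, hm⟩ := (hmem r).1 hr
      have hg := hηk k
      rw [← show collapse (l.map (sccOf E)) = Ps k from hc] at hg
      obtain ⟨N, hN⟩ := eventually_walk hp.1 hg
      refine ⟨N, fun _ n hn hnr => hN n hn ?_⟩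
      rw [← hm, ← hnr, Nat.mod_mod_of_dvd _ (hdvd k hk)]
    · exact ⟨0, fun h => absurd h hr⟩
  choose F hF using key2
  obtain ⟨N, hN⟩ : ∃ N, ∀ n, N < n → (HasWalk E n i j ↔ n % ηbar ∈ πbar) := by
    refine ⟨Fintype.card V + ∑ r ∈ Finset.range ηbar, F r, fun n hn =>
      ⟨key1 n (by omega), fun h => hF _ h n ?_ rfl⟩⟩
    have := Finset.single_le_sum (f := F) (fun _ _ => Nat.zero_le _)
      (Finset.mem_range.2 (Nat.mod_lt n hbar0))
    omega
  have hsub : ∀ c ∈ πbar, c < ηbar := fun c hc => by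
    obtain ⟨k, -, h, -⟩ := (hmem c).1 hc
    exact h
  have hinf : ∀ (S : Set ℕ) (r : ℕ), r < ηbar → (∀ n, N < n → n % ηbar = r → n ∈ S) →
      S.Infinite := by
    intro S r hr hS
    rw [Set.infinite_iff_exists_gt]
    intro a
    have h1 : a + N + 1 ≤ ηbar * (a + N + 1) := Nat.le_mul_of_pos_left _ hbar0
    refine ⟨r + ηbar * (a + N + 1), hS _ (by omega) ?_, by omega⟩
    rw [Nat.add_mul_mod_self_left, Nat.mod_eq_of_lt hr]
  constructor
  · rintro ⟨h1, h2⟩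
    constructor
    · rintro h0
      obtain ⟨n, hn, hnN⟩ := Set.infinite_iff_exists_gt.1 h1 N
      have := (hN n hnN).1 hn.2
      simp [h0] at this
    · rintro h0
      obtain ⟨n, hn, hnN⟩ := Set.infinite_iff_exists_gt.1 h2 N
      exact hn.2 ⟨hn.1, (hN n hnN).2 (by rw [h0]; exact Nat.mod_lt _ hbar0)⟩
  · rintro ⟨h1, h2⟩
    constructor
    · obtain ⟨r, hr⟩ := Set.nonempty_iff_ne_empty.2 h1
      exact hinf _ r (hsub r hr) fun n hn hnr => ⟨by omega, (hN n hn).2 (by rw [hnr]; exact hr)⟩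
    · obtain ⟨r, hr, hr'⟩ : ∃ r, r < ηbar ∧ r ∉ πbar := by
        by_contra hcon
        push Not at hcon
        exact h2 (Set.Subset.antisymm hsub hcon)
      refine hinf _ r hr fun n hn hnr => ⟨by omega, fun h => hr' ?_⟩
      rw [← hnr]
      exact (hN n hn).1 h.2


end BCNPaper8
end

section
/- Let G be a finite directed graph and let i, i' be vertices in the same strongly connected component of G and j, j' be vertices in the same strongly connected component of G. Then the pairs (i, j) and (i', j') belong to the same controllability category; that is: ρ(i,j) is empty if and only if ρ(i',j') is empty; ρ(i,j) is finite if and only if ρ(i',j') is finite; and σ(i,j) is finite if and only if σ(i',j') is finite. (In the paper's notation: the controllability categorization matrix satisfies C_{j'i'} = C_{ji} whenever i, i' lie in the same SCC X_α and j, j' lie in the same SCC X_β; hence a condensation controllability categorization matrix indexed by SCCs is well defined.) -/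
namespace BCNPaper10

variable {V : Type*}

/-- A walk from `i` to `j` encoded as a nonempty list of visited vertices. -/
def IsWalk (E : V → V → Prop) (i j : V) (l : List V) : Prop :=
  l.head? = some i ∧ l.getLast? = some j ∧ l.Chain' E

/-- There is a walk of length exactly `k` from `i` to `j`. -/
def HasWalk (E : V → V → Prop) (k : ℕ) (i j : V) : Prop :=
  ∃ l : List V, IsWalk E i j l ∧ l.length = k + 1

/-- The set of reachable time steps ρ(i,j). -/
def rho (E : V → V → Prop) (i j : V) : Set ℕ :=
  {k | 0 < k ∧ HasWalk E k i j}

/-- The set of unreachable time steps σ(i,j). -/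
def sigmaSet (E : V → V → Prop) (i j : V) : Set ℕ :=
  {k | 0 < k ∧ k ∉ rho E i j}

/-- `u` and `v` lie in the same strongly connected component. -/
def SameSCC (E : V → V → Prop) (u v : V) : Prop :=
  u = v ∨ ((∃ k : ℕ, 0 < k ∧ HasWalk E k u v) ∧ (∃ k : ℕ, 0 < k ∧ HasWalk E k v u))

theorem HasWalk.trans {E : V → V → Prop} {a b : ℕ} {u v w : V}
    (h₁ : HasWalk E a u v) (h₂ : HasWalk E b v w) : HasWalk E (a + b) u w := by
  obtain ⟨l₁, ⟨hh₁, hl₁, hc₁⟩, hn₁⟩ := h₁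
  obtain ⟨l₂, ⟨hh₂, hl₂, hc₂⟩, hn₂⟩ := h₂
  cases l₂ with
  | nil => simp at hh₂
  | cons x t =>
    simp only [List.head?_cons, Option.some.injEq] at hh₂
    subst hh₂
    refine ⟨l₁ ++ t, ⟨?_, ?_, ?_⟩, ?_⟩
    · simp [List.head?_append, hh₁]
    · cases t with
      | nil => simpa [hl₁] using hl₂
      | cons y t => simpa [List.getLast?_append, List.getLast?_cons_cons] using hl₂
    · cases t with
      | nil => simpa using hc₁
      | cons y t =>
        have hc₂' := List.isChain_cons_cons.1 hc₂
        refine List.isChain_append.2 ⟨hc₁, hc₂'.2, ?_⟩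
        intro p hp q hq
        rw [hl₁] at hp
        simp at hp hq
        subst hp hq
        exact hc₂'.1
    · simp at hn₂ ⊢
      omega

theorem hasWalk_zero (E : V → V → Prop) (u : V) : HasWalk E 0 u u :=
  ⟨[u], ⟨rfl, rfl, List.isChain_singleton u⟩, rfl⟩

theorem SameSCC.symm {E : V → V → Prop} {u v : V} (h : SameSCC E u v) : SameSCC E v u := by
  rcases h with h | ⟨h₁, h₂⟩
  · exact Or.inl h.symm
  · exact Or.inr ⟨h₂, h₁⟩

theorem SameSCC.walk {E : V → V → Prop} {u v : V} (h : SameSCC E u v) :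
    ∃ k, HasWalk E k u v := by
  rcases h with rfl | ⟨⟨k, _, h⟩, _⟩
  · exact ⟨0, hasWalk_zero E u⟩
  · exact ⟨k, h⟩

theorem shift {E : V → V → Prop} {i i' j j' : V}
    (hi : SameSCC E i i') (hj : SameSCC E j j') :
    ∃ c, ∀ k ∈ rho E i j, k + c ∈ rho E i' j' := by
  obtain ⟨a, ha⟩ := hi.symm.walk
  obtain ⟨b, hb⟩ := hj.walk
  refine ⟨a + b, fun k hk => ⟨by have := hk.1; omega, ?_⟩⟩
  have := (ha.trans hk.2).trans hb
  rwa [show a + k + b = k + (a + b) by omega] at this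

theorem half {E : V → V → Prop} {i i' j j' : V}
    (hi : SameSCC E i i') (hj : SameSCC E j j') :
    (rho E i' j' = ∅ → rho E i j = ∅) ∧
    ((rho E i' j').Finite → (rho E i j).Finite) ∧
    ((sigmaSet E i j).Finite → (sigmaSet E i' j').Finite) := by
  obtain ⟨c, hc⟩ := shift hi hj
  refine ⟨fun h => ?_, fun h => ?_, fun h => ?_⟩
  · refine Set.eq_empty_of_forall_notMem fun k hk => ?_
    have := hc k hk
    rw [h] at this
    exact this
  · exact Set.Finite.of_injOn (f := fun k => k + c) hc
      (fun x _ y _ hxy => Nat.add_right_cancel hxy) h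
  · refine ((Set.finite_Iic c).union (h.image (fun k => k + c))).subset ?_
    rintro k ⟨hk, hk'⟩
    by_cases hkc : k ≤ c
    · exact Or.inl hkc
    · refine Or.inr ⟨k - c, ⟨by omega, fun hm => hk' ?_⟩, by simp; omega⟩
      have := hc _ hm
      rwa [show k - c + c = k by omega] at this

theorem stmt10 [Fintype V] (E : V → V → Prop) (i i' j j' : V)
    (hi : SameSCC E i i') (hj : SameSCC E j j') :
    (rho E i j = ∅ ↔ rho E i' j' = ∅) ∧
    ((rho E i j).Finite ↔ (rho E i' j').Finite) ∧
    ((sigmaSet E i j).Finite ↔ (sigmaSet E i' j').Finite) := by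
  obtain ⟨h₁, h₂, h₃⟩ := half hi hj
  obtain ⟨g₁, g₂, g₃⟩ := half hi.symm hj.symm
  exact ⟨⟨g₁, h₁⟩, ⟨g₂, h₂⟩, ⟨h₃, g₃⟩⟩

end BCNPaper10
end

section
/- Let G be a finite directed graph and let i, j be vertices lying in the same strongly connected component (i.e., i = j, or there are positive-length walks from i to j and from j to i). Suppose the greatest common divisor of the lengths of all closed walks of positive length through i equals 1. Then the pair (i, j) belongs to the primitive category: ρ(i,j) is infinite and σ(i,j) is finite. -/
namespace BCNPaper11

variable {V : Type*}

/-- A walk from `i` to `j` encoded as a nonempty list of visited vertices. -/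
def IsWalk (E : V → V → Prop) (i j : V) (l : List V) : Prop :=
  l.head? = some i ∧ l.getLast? = some j ∧ l.Chain' E

/-- There is a walk of length exactly `k` from `i` to `j`. -/
def HasWalk (E : V → V → Prop) (k : ℕ) (i j : V) : Prop :=
  ∃ l : List V, IsWalk E i j l ∧ l.length = k + 1

/-- The set of reachable time steps ρ(i,j). -/
def rho (E : V → V → Prop) (i j : V) : Set ℕ :=
  {k | 0 < k ∧ HasWalk E k i j}

/-- The set of unreachable time steps σ(i,j). -/
def sigmaSet (E : V → V → Prop) (i j : V) : Set ℕ :=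
  {k | 0 < k ∧ k ∉ rho E i j}

/-- `g` is the greatest common divisor of the set `S` of natural numbers. -/
def IsGCDSet (S : Set ℕ) (g : ℕ) : Prop :=
  (∀ s ∈ S, g ∣ s) ∧ ∀ d : ℕ, (∀ s ∈ S, d ∣ s) → d ∣ g

theorem HasWalk.comp {E : V → V → Prop} {a b : ℕ} {i j k : V}
    (h1 : HasWalk E a i j) (h2 : HasWalk E b j k) : HasWalk E (a + b) i k := by
  obtain ⟨l1, ⟨hh1, hl1, hc1⟩, hn1⟩ := h1
  obtain ⟨l2, ⟨hh2, hl2, hc2⟩, hn2⟩ := h2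
  cases l2 with
  | nil => simp at hh2
  | cons x t =>
    simp only [List.head?_cons, Option.some.injEq] at hh2
    subst hh2
    refine ⟨l1 ++ t, ⟨?_, ?_, ?_⟩, ?_⟩
    · simp [List.head?_append, hh1]
    · cases t with
      | nil => simpa [hl1] using hl2
      | cons y t =>
        rw [List.getLast?_cons_cons] at hl2
        rw [List.getLast?_append, hl2]
        rfl
    · refine List.isChain_append.2 ⟨hc1, List.IsChain.tail hc2, ?_⟩
      intro u hu v hv
      rw [hl1] at hu
      simp only [Option.mem_def, Option.some.injEq] at hu
      subst hu
      exact (List.isChain_cons.1 hc2).1 v hv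
    · simp only [List.length_append, List.length_cons] at *
      omega

theorem HasWalk.zero (E : V → V → Prop) (i : V) : HasWalk E 0 i i :=
  ⟨[i], ⟨rfl, rfl, List.isChain_singleton i⟩, rfl⟩

theorem exists_bound (E : V → V → Prop) (i j : V)
    (hscc : ∃ k : ℕ, HasWalk E k i j)
    (hgcd : IsGCDSet {k : ℕ | 0 < k ∧ HasWalk E k i i} 1) :
    ∃ N, ∀ m ≥ N, HasWalk E m i j := by
  obtain ⟨k, hk⟩ := hscc
  obtain ⟨n, hn⟩ := Nat.exists_mem_closure_of_ge {k : ℕ | 0 < k ∧ HasWalk E k i i}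
  have hd := hgcd.2 _ (fun s hs => Nat.setGcd_dvd_of_mem hs)
  refine ⟨n + k, fun m hm => ?_⟩
  have hc := hn (m - k) (by omega) (hd.trans (one_dvd _))
  have hw : HasWalk E (m - k) i i := by
    refine AddSubmonoid.closure_induction (motive := fun x _ => HasWalk E x i i)
      (fun x hx => hx.2) (HasWalk.zero E i) (fun x y _ _ hx hy => hx.comp hy) hc
  have := hw.comp hk
  rwa [Nat.sub_add_cancel (by omega)] at this

theorem stmt11 [Fintype V] (E : V → V → Prop) (i j : V)
    (hscc : i = j ∨ ((∃ k : ℕ, 0 < k ∧ HasWalk E k i j) ∧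
      (∃ k : ℕ, 0 < k ∧ HasWalk E k j i)))
    (hgcd : IsGCDSet {k : ℕ | 0 < k ∧ HasWalk E k i i} 1) :
    (rho E i j).Infinite ∧ (sigmaSet E i j).Finite := by
  have hk : ∃ k : ℕ, HasWalk E k i j := by
    rcases hscc with rfl | ⟨⟨k, _, hk⟩, _⟩
    · exact ⟨0, HasWalk.zero E i⟩
    · exact ⟨k, hk⟩
  obtain ⟨N, hN⟩ := exists_bound E i j hk hgcd
  constructor
  · refine (Set.Ici_infinite (N + 1)).mono fun m hm => ?_
    have hm' : N + 1 ≤ m := hm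
    exact ⟨by omega, hN m (by omega)⟩
  · refine (Set.finite_Iio N).subset fun m hm => ?_
    by_contra h
    have h' : N ≤ m := not_lt.1 h
    exact hm.2 ⟨hm.1, hN m h'⟩

end BCNPaper11
end

section
/- Let G be a directed graph, let w be a walk of length L from vertex i to vertex j, and let c_1, ..., c_m (m ≥ 1) be closed walks of positive lengths ℓ_1, ..., ℓ_m such that each c_t shares at least one vertex with w. Let g := gcd(ℓ_1, ..., ℓ_m). Then there exists a positive integer n_0 such that for every integer n ≥ n_0 there is a walk from i to j of length exactly L + n·g. -/
namespace BCNPaper13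

variable {V : Type*}

/-- A walk from `i` to `j` encoded as a nonempty list of visited vertices. -/
def IsWalk (E : V → V → Prop) (i j : V) (l : List V) : Prop :=
  l.head? = some i ∧ l.getLast? = some j ∧ l.Chain' E

/-- There is a walk of length exactly `k` from `i` to `j`. -/
def HasWalk (E : V → V → Prop) (k : ℕ) (i j : V) : Prop :=
  ∃ l : List V, IsWalk E i j l ∧ l.length = k + 1

theorem glue {E : V → V → Prop} {x y z : V} {l₁ l₂ : List V}
    (h₁ : IsWalk E x y l₁) (h₂ : IsWalk E y z l₂) : IsWalk E x z (l₁ ++ l₂.tail) := by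
  obtain ⟨a1, a2, a3⟩ := h₁
  obtain ⟨b1, b2, b3⟩ := h₂
  cases l₂ with
  | nil => simp at b1
  | cons u r =>
    simp only [List.head?_cons, Option.some.injEq] at b1
    subst b1
    refine ⟨?_, ?_, ?_⟩
    · simp [List.head?_append, a1]
    · cases r with
      | nil => simpa [a2] using b2
      | cons s r => simpa [List.getLast?_append] using b2
    · refine List.IsChain.append a3 (List.IsChain.tail b3) ?_
      intro p hp q hq
      rw [a2] at hp
      simp only [Option.mem_def, Option.some.injEq] at hp
      subst hp
      cases r with
      | nil => simp at hq
      | cons s r =>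
        simp only [List.tail_cons, List.head?_cons, Option.mem_def, Option.some.injEq] at hq
        subst hq
        exact (List.isChain_cons_cons.mp b3).1

theorem split {E : V → V → Prop} {x y u : V} {a b : List V}
    (h : IsWalk E x y (a ++ u :: b)) :
    IsWalk E x u (a ++ [u]) ∧ IsWalk E u y (u :: b) := by
  obtain ⟨h1, h2, h3⟩ := h
  refine ⟨⟨?_, ?_, ?_⟩, ?_, ?_, ?_⟩
  · cases a <;> simpa using h1
  · simp
  · have : a ++ u :: b = (a ++ [u]) ++ b := by simp
    rw [this] at h3
    exact List.IsChain.left_of_append h3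
  · simp
  · simpa [List.getLast?_append] using h2
  · exact List.IsChain.right_of_append h3

theorem insert_closed {E : V → V → Prop} {i j v u : V} {l c : List V} {n k : ℕ}
    (hl : IsWalk E i j l) (hn : l.length = n + 1)
    (hc : IsWalk E v v c) (hk : c.length = k + 1) (ul : u ∈ l) (uc : u ∈ c) :
    ∃ l', IsWalk E i j l' ∧ l'.length = n + k + 1 ∧ l ⊆ l' := by
  obtain ⟨a, b, rfl⟩ := List.append_of_mem ul
  obtain ⟨p, q, rfl⟩ := List.append_of_mem uc
  obtain ⟨l1, l2⟩ := split hl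
  obtain ⟨c1, c2⟩ := split hc
  refine ⟨_, glue (glue l1 (glue c2 c1)) l2, ?_, ?_⟩
  · simp at hn hk ⊢
    omega
  · intro s hs
    simp at hs ⊢
    tauto

theorem stmt13 (E : V → V → Prop) (i j : V) (L : ℕ)
    (w : List V) (hw : IsWalk E i j w) (hwlen : w.length = L + 1)
    (m : ℕ) (hm : 1 ≤ m)
    (c : Fin m → List V) (ℓ : Fin m → ℕ)
    -- each `c t` is a closed walk of positive length `ℓ t`
    (hc : ∀ t : Fin m, ∃ v : V, IsWalk E v v (c t))
    (hclen : ∀ t : Fin m, (c t).length = ℓ t + 1)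
    (hcpos : ∀ t : Fin m, 0 < ℓ t)
    -- each `c t` shares at least one vertex with `w`
    (hshare : ∀ t : Fin m, ∃ u : V, u ∈ c t ∧ u ∈ w)
    (g : ℕ) (hg : g = Finset.univ.gcd ℓ) :
    ∃ n₀ : ℕ, 0 < n₀ ∧ ∀ n : ℕ, n₀ ≤ n → HasWalk E (L + n * g) i j := by
  have key : ∀ n ∈ AddSubmonoid.closure (Set.range ℓ), ∀ (k : ℕ) (l : List V),
      IsWalk E i j l → l.length = k + 1 → w ⊆ l →
      ∃ l', IsWalk E i j l' ∧ l'.length = k + n + 1 ∧ w ⊆ l' := by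
    intro n hn
    induction hn using AddSubmonoid.closure_induction with
    | mem x hx =>
      obtain ⟨t, rfl⟩ := hx
      intro k l hl hk hwl
      obtain ⟨v, hv⟩ := hc t
      obtain ⟨u, huc, huw⟩ := hshare t
      obtain ⟨l', h1, h2, h3⟩ := insert_closed hl hk hv (hclen t) (hwl huw) huc
      exact ⟨l', h1, h2, fun s hs => h3 (hwl hs)⟩
    | zero => exact fun k l hl hk hwl => ⟨l, hl, hk, hwl⟩
    | add x y _ _ ihx ihy =>
      intro k l hl hk hwl
      obtain ⟨l1, h1, h2, h3⟩ := ihx k l hl hk hwl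
      obtain ⟨l2, h4, h5, h6⟩ := ihy _ l1 h1 h2 h3
      exact ⟨l2, h4, by omega, h6⟩
  obtain ⟨N, hN⟩ := Nat.exists_mem_closure_of_ge (Set.range ℓ)
  have hdvd : Nat.setGcd (Set.range ℓ) ∣ g := by
    rw [hg]
    exact Finset.dvd_gcd fun t _ => Nat.setGcd_dvd_of_mem ⟨t, rfl⟩
  have hgpos : 0 < g := by
    have h : g ∣ ℓ ⟨0, hm⟩ := hg ▸ Finset.gcd_dvd (Finset.mem_univ _)
    exact Nat.pos_of_dvd_of_pos h (hcpos _)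
  refine ⟨N + 1, Nat.succ_pos _, fun n hn => ?_⟩
  have hge : N ≤ n * g := by nlinarith
  obtain ⟨l, h1, h2, _⟩ := key _ (hN _ hge (hdvd.mul_left n)) L w hw hwlen (fun _ h => h)
  exact ⟨l, h1, h2⟩

end BCNPaper13
end

section
/- Let G be a finite directed graph and let i, j be vertices. Then the set of reachable time steps ρ(i,j) is eventually periodic: there exist a positive integer d and a positive integer T such that for every integer n ≥ T, n ∈ ρ(i,j) if and only if n + d ∈ ρ(i,j). Consequently, exactly one of the following holds: ρ(i,j) is finite (possibly empty), σ(i,j) is finite, or both ρ(i,j) and σ(i,j) are infinite with ρ(i,j) eventually a union of arithmetic progressions of common difference d. -/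
namespace BCNPaper15

variable {V : Type*}

/-- A walk from `i` to `j` encoded as a nonempty list of visited vertices. -/
def IsWalk (E : V → V → Prop) (i j : V) (l : List V) : Prop :=
  l.head? = some i ∧ l.getLast? = some j ∧ l.Chain' E

/-- There is a walk of length exactly `k` from `i` to `j`. -/
def HasWalk (E : V → V → Prop) (k : ℕ) (i j : V) : Prop :=
  ∃ l : List V, IsWalk E i j l ∧ l.length = k + 1

/-- The set of reachable time steps ρ(i,j). -/
def rho (E : V → V → Prop) (i j : V) : Set ℕ :=
  {k | 0 < k ∧ HasWalk E k i j}

/-- The set of unreachable time steps σ(i,j). -/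
def sigmaSet (E : V → V → Prop) (i j : V) : Set ℕ :=
  {k | 0 < k ∧ k ∉ rho E i j}

theorem hasWalk_succ (E : V → V → Prop) (k : ℕ) (i j : V) :
    HasWalk E (k + 1) i j ↔ ∃ m, E i m ∧ HasWalk E k m j := by
  constructor
  · rintro ⟨l, ⟨h1, h2, h3⟩, hl⟩
    match l, h1, h2, h3, hl with
    | a :: b :: t, h1, h2, h3, hl =>
      have h3' : List.IsChain E (a :: b :: t) := h3
      rw [List.isChain_cons_cons] at h3'
      simp only [List.head?_cons, Option.some.injEq] at h1
      subst h1
      refine ⟨b, h3'.1, b :: t, ⟨rfl, ?_, h3'.2⟩, ?_⟩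
      · simpa using h2
      · simpa using hl
  · rintro ⟨m, hm, l, ⟨h1, h2, h3⟩, hl⟩
    match l, h1, h2, h3, hl with
    | b :: t, h1, h2, h3, hl =>
      simp only [List.head?_cons, Option.some.injEq] at h1
      subst h1
      refine ⟨i :: b :: t, ⟨rfl, ?_, List.isChain_cons_cons.2 ⟨hm, h3⟩⟩, ?_⟩
      · simpa using h2
      · simpa using hl

theorem hasWalk_shift (E : V → V → Prop) (j : V) (a b : ℕ)
    (h : {v | HasWalk E a v j} = {v | HasWalk E b v j}) (n : ℕ) :
    ∀ v, HasWalk E (a + n) v j ↔ HasWalk E (b + n) v j := by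
  induction n with
  | zero => exact fun v => Set.ext_iff.1 h v
  | succ n ih =>
    intro v
    rw [← add_assoc, ← add_assoc, hasWalk_succ, hasWalk_succ]
    simp only [ih]

theorem stmt15 [Fintype V] (E : V → V → Prop) (i j : V) :
    ∃ d T : ℕ, 0 < d ∧ 0 < T ∧
      (∀ n : ℕ, T ≤ n → (n ∈ rho E i j ↔ n + d ∈ rho E i j)) ∧
      (((rho E i j).Finite ∧ (sigmaSet E i j).Infinite) ∨
       ((rho E i j).Infinite ∧ (sigmaSet E i j).Finite) ∨
       ((rho E i j).Infinite ∧ (sigmaSet E i j).Infinite)) := by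
  obtain ⟨a, b, hab, h⟩ : ∃ a b : ℕ, a < b ∧
      {v | HasWalk E a v j} = {v | HasWalk E b v j} := by
    obtain ⟨a, b, hne, h⟩ :=
      Finite.exists_ne_map_eq_of_infinite (fun k : ℕ => {v | HasWalk E k v j})
    rcases lt_or_gt_of_ne hne with h' | h'
    · exact ⟨a, b, h', h⟩
    · exact ⟨b, a, h', h.symm⟩
  refine ⟨b - a, a + 1, by omega, by omega, ?_, ?_⟩
  · intro n hn
    have key := hasWalk_shift E j a b h (n - a) i
    rw [show a + (n - a) = n by omega, show b + (n - a) = n + (b - a) by omega] at key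
    simp only [rho, Set.mem_setOf_eq, key]
    have h1 : 0 < n := by omega
    have h2 : 0 < n + (b - a) := by omega
    simp only [h1, h2]
  · have hU : ¬ ((rho E i j).Finite ∧ (sigmaSet E i j).Finite) := by
      rintro ⟨h1, h2⟩
      refine Set.Ioi_infinite 0 ((h1.union h2).subset ?_)
      intro k hk
      by_cases hk' : k ∈ rho E i j
      · exact Or.inl hk'
      · exact Or.inr ⟨hk, hk'⟩
    unfold Set.Infinite
    tauto

end BCNPaper15
end
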